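/- Let d ≥ 1, let v_1 < v_2 < … < v_k be a chain in {0,1}^d, and let n_1,…,n_k ≥ 1 be integers with n_1+…+n_k = d+1. Assume that for all 1 ≤ i ≤ k−1 one has |v_i| + 1 ≤ n_1+…+n_i ≤ |v_{i+1}|, and |v_k| + 1 ≤ d+1. Set y_0 = |v_1|, x_i = n_1+…+n_i − |v_i| − 1 for 1 ≤ i ≤ k, and y_i = |v_{i+1}| − (n_1+…+n_i) for 1 ≤ i ≤ k−1 (all of which are non-negative). Then deg(C_{v_1}^{n_1}⋯C_{v_k}^{n_k}) = (−1)^{d+1−k} · binom(y_0+x_1, y_0) · binom(x_1+y_1, x_1) · binom(y_1+x_2, y_1) ⋯ binom(x_{k−1}+y_{k−1}, y_{k−1}) · binom(y_{k−1}+x_k, x_k), i.e., the sign (−1)^{d+1−k} times the product binom(y_0+x_1, y_0) · ∏_{i=1}^{k−1} binom(x_i+y_i, x_i)·binom(y_i+x_{i+1}, y_i). -/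

import Mathlib

/-!
The proof computes the class of every monomial `C_{v_1}^{n_1} ⋯ C_{v_k}^{n_k}` of degree `d + 1`
supported on a chain, including those for which the inequalities of the theorem fail (their class
is zero); allowing these makes the induction uniform.

*Reduction.* Suppose `n_i ≥ 2`. By (R1) and (R2), `C_{v_i}^2` equals minus the sum of all
`C_{v_i} C_w` with `w` strictly below or strictly above `v_i` (`cls_sq`). If `b` is a coordinate in
which `v_{i-1}` and `v_i` differ, (R3) shows that in the presence of `C_{v_{i-1}} C_{v_i}` the sum
over `w < v_i` may be restricted to those `w` between `v_{i-1}` and `v_i` with `w_b = 1`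
(`sum_lower`); dually for the upper part (`sum_upper`). So the monomial is minus a sum of monomials
on chains with one more vertex, and induction ends at maximal chains. These all have the same class
because two chains differing in one vertex do (`cls_swap`, `IsSaturatedProd.unique`).

*Numbers.* Write `M` for `|v_{i-1}| + 1`, `N` for `n_1 + ⋯ + n_{i-1}` and `w` for `|v_i|`, with
`M = N = 0` for `i = 1`. Since `y_{i-1} + x_i = n_i - 1` and
`x_{i-1} + y_{i-1} = |v_i| - |v_{i-1}| - 1`, the product in the theorem has one factor
`binom(n_i - 1, w - N)` for each vertex and one factor `binom(w - M, N - M)` for each gap; this is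
the function `coef`. A vertex inserted with exponent `1` below `v_i` contributes only if its weight
is `N`, and the number of candidates of this weight is exactly the gap factor; similarly above
`v_i`. Hence the recursion for `coef` is Pascal's rule for `binom(n_i - 1, w - N)` (`coef_split`),
and `mon_eq` follows by induction on `d + 1 - k`.
-/

open MvPolynomial

namespace ChowCube

/-- The vertices of the hypercube `□^ι = {0,1}^ι`. -/
abbrev Cube (ι : Type) : Type := ι → Fin 2

variable (ι : Type) [Fintype ι] [DecidableEq ι]

/-- The ideal `I_rat(□^ι)` of elements rationally equivalent to zero, generated by
(R1) products over lists of points which are not pairwise comparable,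
(R2) `C_u · (Σ_v C_v)`, and (R3) `C_u C_w · (Σ_{v : v_i = u_i} C_v)` for `u_i ≠ w_i`. -/
noncomputable def Irat : Ideal (MvPolynomial (Cube ι) ℤ) :=
  Ideal.span
    ({ p | ∃ l : List (Cube ι),
        ¬ (l.Pairwise fun u v => u ≤ v ∨ v ≤ u) ∧ p = (l.map X).prod } ∪
     { p | ∃ u : Cube ι, p = X u * ∑ v : Cube ι, X v } ∪
     { p | ∃ u w : Cube ι, ∃ i : ι, u i ≠ w i ∧
         p = X u * X w * ∑ v ∈ Finset.univ.filter (fun v : Cube ι => v i = u i), X v })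

/-- The Chow ring of the hypercube, `Chow(□^ι) = Z(□^ι)/I_rat`. -/
abbrev Chow : Type := MvPolynomial (Cube ι) ℤ ⧸ Irat ι

noncomputable def mk : MvPolynomial (Cube ι) ℤ →ₐ[ℤ] Chow ι :=
  Ideal.Quotient.mkₐ ℤ (Irat ι)

/-- The degree `n` graded piece `Chow^n(□^ι)`. -/
noncomputable def piece (n : ℕ) : Submodule ℤ (Chow ι) :=
  Submodule.map (mk ι).toLinearMap (homogeneousSubmodule (Cube ι) ℤ n)

/-- The number of coordinates equal to `1`. -/
def wt (u : Cube ι) : ℕ := (Finset.univ.filter fun i => u i = 1).card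

/-- The `j`-th vertex of the standard maximal chain in `{0,1}^ι`: the indicator
function of the set of the `j` smallest indices. -/
def chainVtx [LinearOrder ι] (j : ℕ) : Cube ι :=
  fun i => if (Finset.univ.filter fun i' => i' < i).card < j then 1 else 0

/-- The monomial `C_{u_0}⋯C_{u_card ι}` of the standard maximal chain;
its class generates the top graded piece, and the degree map `deg` is the isomorphism
`Chow^{card ι + 1}(□^ι) ≅ ℤ` sending this class to `1`. -/
noncomputable def genMono [LinearOrder ι] : MvPolynomial (Cube ι) ℤ :=
  ∏ j ∈ Finset.range (Fintype.card ι + 1), X (chainVtx ι j)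

end ChowCube
namespace ChowCube

section DegreeFormula

variable {d k : ℕ} (v : Fin k → Cube (Fin d)) (n : Fin k → ℕ)

/-- The (1-based) partial sum `n_1 + … + n_i`. -/
def ps1 (n : Fin k → ℕ) (i : ℕ) : ℕ :=
  ∑ j ∈ Finset.univ.filter (fun j : Fin k => (j : ℕ) < i), n j

/-- The chain `v`, extended to a total function on `ℕ` (0-based indexing:
`vext v i` is `v_{i+1}` in 1-based notation). -/
def vext (v : Fin k → Cube (Fin d)) (i : ℕ) : Cube (Fin d) :=
  if h : i < k then v ⟨i, h⟩ else fun _ => 0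

/-- `x_i = (n_1+…+n_i) − |v_i| − 1` (1-based, `1 ≤ i ≤ k`). -/
def xseq (v : Fin k → Cube (Fin d)) (n : Fin k → ℕ) (i : ℕ) : ℕ :=
  ps1 n i - wt (Fin d) (vext v (i - 1)) - 1

/-- `y_0 = |v_1|` and `y_i = |v_{i+1}| − (n_1+…+n_i)` (1-based, `1 ≤ i ≤ k−1`). -/
def yseq (v : Fin k → Cube (Fin d)) (n : Fin k → ℕ) (i : ℕ) : ℕ :=
  if i = 0 then wt (Fin d) (vext v 0) else wt (Fin d) (vext v i) - ps1 n i

end DegreeFormula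

end ChowCube

/-! ### Vertices of the cube and their weights -/

namespace ChowCube

section Weights

variable {d : ℕ}

/-- The set of coordinates of a vertex that are equal to `1`. -/
def supp (u : Cube (Fin d)) : Finset (Fin d) := Finset.univ.filter fun i => u i = 1

@[simp] lemma mem_supp (u : Cube (Fin d)) (i : Fin d) : i ∈ supp u ↔ u i = 1 := by
  simp [supp]

lemma wt_eq (u : Cube (Fin d)) : wt (Fin d) u = (supp u).card := rfl

lemma le_iff_supp (u w : Cube (Fin d)) : u ≤ w ↔ supp u ⊆ supp w := by
  constructor
  · intro h i hi
    have h1 := h i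
    rw [mem_supp] at *
    rw [hi] at h1
    exact le_antisymm (Fin.le_last _) h1
  · intro h i
    have h1 := @h i
    rw [mem_supp, mem_supp] at h1
    rcases Fin.exists_fin_two.1 ⟨u i, rfl⟩ with h2 | h2
    · rw [h2]; exact Fin.zero_le _
    · rw [h1 h2]; exact Fin.le_last _

lemma coord_le {u w : Cube (Fin d)} (h : u ≤ w) (i : Fin d) : u i ≤ w i := h i

lemma supp_injective : Function.Injective (supp : Cube (Fin d) → Finset (Fin d)) := by
  intro u w h
  apply le_antisymm <;> rw [le_iff_supp, h]

lemma wt_mono {u w : Cube (Fin d)} (h : u ≤ w) : wt (Fin d) u ≤ wt (Fin d) w :=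
  Finset.card_le_card ((le_iff_supp u w).1 h)

lemma wt_strictMono {u w : Cube (Fin d)} (h : u < w) : wt (Fin d) u < wt (Fin d) w := by
  refine Finset.card_lt_card ?_
  exact (Finset.ssubset_iff_subset_ne).2
    ⟨(le_iff_supp u w).1 h.le, fun e => h.ne (supp_injective e)⟩

lemma wt_le (u : Cube (Fin d)) : wt (Fin d) u ≤ d := by
  simpa [wt_eq] using Finset.card_le_univ (supp u)

lemma wt_top : wt (Fin d) (⊤ : Cube (Fin d)) = d := by
  have : supp (⊤ : Cube (Fin d)) = Finset.univ := by
    ext i; simp only [mem_supp, Finset.mem_univ, iff_true]; rfl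
  rw [wt_eq, this]; simp

lemma wt_bot : wt (Fin d) (⊥ : Cube (Fin d)) = 0 := by
  have : supp (⊥ : Cube (Fin d)) = ∅ := by
    ext i
    simp only [mem_supp, Finset.notMem_empty, iff_false]
    change ¬ ((0 : Fin 2) = 1)
    decide
  rw [wt_eq, this]; simp

lemma wt_update_one {u : Cube (Fin d)} {i : Fin d} (h : u i = 0) :
    wt (Fin d) (Function.update u i 1) = wt (Fin d) u + 1 := by
  have : supp (Function.update u i 1) = insert i (supp u) := by
    ext j
    by_cases hj : j = i <;> simp [hj]
  rw [wt_eq, this, Finset.card_insert_of_notMem (by simp [h]), wt_eq]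

lemma wt_update_zero {u : Cube (Fin d)} {i : Fin d} (h : u i = 1) :
    wt (Fin d) (Function.update u i 0) + 1 = wt (Fin d) u := by
  rw [← wt_update_one (i := i) (Function.update_self i 0 u), Function.update_idem, ← h, Function.update_eq_self]

lemma exists_coord {u w : Cube (Fin d)} (h : u < w) : ∃ i, u i = 0 ∧ w i = 1 := by
  obtain ⟨_, i, hi⟩ := Pi.lt_def.1 h
  exact ⟨i, by omega, by omega⟩

lemma update_one_le_iff {u w : Cube (Fin d)} {i : Fin d} (h : u i = 0) :
    Function.update u i 1 ≤ w ↔ u ≤ w ∧ w i = 1 := by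
  constructor
  · intro hw
    have hi := coord_le hw i
    simp only [Function.update_self] at hi
    refine ⟨fun j => ?_, by omega⟩
    by_cases hj : j = i
    · subst hj; simp [h]
    · simpa [hj] using hw j
  · rintro ⟨hu, hi⟩ j
    by_cases hj : j = i
    · subst hj; simp [hi]
    · simpa [hj] using hu j

lemma le_update_zero_iff {u w : Cube (Fin d)} {i : Fin d} (h : u i = 1) :
    w ≤ Function.update u i 0 ↔ w ≤ u ∧ w i = 0 := by
  constructor
  · intro hw
    have hi := coord_le hw i
    simp only [Function.update_self] at hi
    refine ⟨fun j => ?_, by omega⟩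
    by_cases hj : j = i
    · subst hj; rw [h]; exact Fin.le_last _
    · simpa [hj] using hw j
  · rintro ⟨hu, hi⟩ j
    by_cases hj : j = i
    · subst hj; simp [hi]
    · simpa [hj] using hu j

/-- The vertices of weight `N` in the interval `[p, q]` correspond to the subsets of size `N - |p|` of
the set of coordinates in which `p` and `q` differ. -/
lemma card_Icc_wt {p q : Cube (Fin d)} (hpq : p ≤ q) {N : ℕ} (hN : wt (Fin d) p ≤ N) :
    ((Finset.Icc p q).filter fun w => wt (Fin d) w = N).card =
      (wt (Fin d) q - wt (Fin d) p).choose (N - wt (Fin d) p) := by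
  have hs := (le_iff_supp p q).1 hpq
  rw [wt_eq q, wt_eq p, ← Finset.card_sdiff_of_subset hs, ← Finset.card_powersetCard]
  have hsupp : ∀ s : Finset (Fin d), supp (fun i => if i ∈ s then 1 else 0) = s := by
    intro s; ext i; by_cases h : i ∈ s <;> simp [h]
  refine Finset.card_nbij' (fun w => supp w \ supp p)
    (fun s => fun i => if i ∈ supp p ∪ s then 1 else 0) ?_ ?_ ?_ ?_
  · intro w hw
    simp only [Finset.coe_filter, Finset.mem_Icc, Set.mem_ofPred_eq, le_iff_supp] at hw
    obtain ⟨⟨h1, h2⟩, h3⟩ := hw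
    simp only [SetLike.mem_coe, Finset.mem_powersetCard]
    refine ⟨Finset.sdiff_subset_sdiff h2 subset_rfl, ?_⟩
    rw [Finset.card_sdiff_of_subset h1, ← h3, wt_eq]
  · intro s hsm
    simp only [SetLike.mem_coe, Finset.mem_powersetCard] at hsm
    obtain ⟨h1, h2⟩ := hsm
    rw [Finset.mem_coe, Finset.mem_filter, Finset.mem_Icc, le_iff_supp, le_iff_supp, wt_eq, hsupp]
    refine ⟨⟨Finset.subset_union_left,
      Finset.union_subset hs (h1.trans Finset.sdiff_subset)⟩, ?_⟩
    rw [Finset.card_union_of_disjoint, h2]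
    · rw [wt_eq] at hN; omega
    · exact Finset.disjoint_of_subset_right h1 Finset.disjoint_sdiff
  · intro w hw
    simp only [Finset.coe_filter, Finset.mem_Icc, Set.mem_ofPred_eq, le_iff_supp] at hw
    apply supp_injective
    rw [hsupp, Finset.union_sdiff_of_subset hw.1.1]
  · intro s hsm
    simp only [SetLike.mem_coe, Finset.mem_powersetCard] at hsm
    simp only [hsupp]
    rw [Finset.union_sdiff_cancel_left]
    exact Finset.disjoint_of_subset_right hsm.1 Finset.disjoint_sdiff

end Weights

/-! ### Relations in the Chow ring -/

section Relations

variable {d : ℕ}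

/-- The class of the generator `C_u` in the Chow ring. -/
noncomputable def cls (u : Cube (Fin d)) : Chow (Fin d) := mk (Fin d) (X u)

lemma mk_eq_zero {p : MvPolynomial (Cube (Fin d)) ℤ} (h : p ∈ Irat (Fin d)) :
    mk (Fin d) p = 0 := Ideal.Quotient.eq_zero_iff_mem.2 h

lemma cls_mul_of_not_comparable {u w : Cube (Fin d)} (h : ¬ (u ≤ w ∨ w ≤ u)) :
    cls u * cls w = 0 := by
  rw [cls, cls, ← map_mul]
  refine mk_eq_zero (Ideal.subset_span (Or.inl (Or.inl ⟨[u, w], ?_, ?_⟩)))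
  · simpa using h
  · simp

lemma cls_mul_sum (u : Cube (Fin d)) : cls u * ∑ w, cls w = 0 := by
  simp only [cls]
  rw [← map_sum, ← map_mul]
  exact mk_eq_zero (Ideal.subset_span (Or.inl (Or.inr ⟨u, rfl⟩)))

lemma cls_mul_cls_mul_sum {u w : Cube (Fin d)} {i : Fin d} (h : u i ≠ w i) :
    cls u * cls w * ∑ x ∈ Finset.univ.filter (fun x : Cube (Fin d) => x i = u i), cls x = 0 := by
  simp only [cls]
  rw [← map_sum, ← map_mul, ← map_mul]
  exact mk_eq_zero (Ideal.subset_span (Or.inr ⟨u, w, i, h, rfl⟩))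

/-- Multiplied by `C_p C_v` with `p_b = 0`, `v_b = 1`, the sum of all `C_w` with `w < v` may be
restricted to those `w ≥ p` with `w_b = 1`: the relation (R3) for `p`, `v`, `b` removes the
vertices with `w_b = 0`, and a vertex with `w_b = 1` comparable to `p` lies above `p`. -/
lemma sum_lower {p v : Cube (Fin d)} {b : Fin d} (hp : p b = 0) (hv : v b = 1) :
    cls p * cls v * ∑ w ∈ Finset.Ico ⊥ v, cls w =
      cls p * cls v * ∑ w ∈ Finset.Ico (Function.update p b 1) v, cls w := by
  classical
  have h0 := cls_mul_cls_mul_sum (u := p) (w := v) (i := b) (by rw [hp, hv]; decide)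
  rw [← sub_zero (cls p * cls v * ∑ w ∈ Finset.Ico ⊥ v, cls w), ← h0]
  simp only [Finset.mul_sum]
  rw [← Fintype.sum_ite_mem, ← Fintype.sum_ite_mem (Finset.Ico _ v)]
  simp only [Finset.sum_filter]
  rw [← Finset.sum_sub_distrib]
  refine Finset.sum_congr rfl fun w _ => ?_
  simp only [Finset.mem_Ico, bot_le, true_and, update_one_le_iff hp, hp]
  by_cases h1 : w ≤ v ∨ v ≤ w
  swap
  · have : cls p * cls v * cls w = 0 := by
      rw [mul_assoc, cls_mul_of_not_comparable (by tauto), mul_zero]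
    simp [this]
  by_cases h2 : w ≤ p ∨ p ≤ w
  swap
  · have : cls p * cls v * cls w = 0 := by
      rw [mul_right_comm, cls_mul_of_not_comparable (by tauto), zero_mul]
    simp [this]
  by_cases hb : w b = 0
  · have hlt : w < v := by
      rcases h1 with h1 | h1
      · refine lt_of_le_of_ne h1 ?_
        rintro rfl; rw [hb] at hv; exact absurd hv (by decide)
      · have := coord_le h1 b; rw [hb, hv] at this; omega
    simp [hb, hlt]
  · have hb1 : w b = 1 := by omega
    have hpw : p ≤ w := by
      rcases h2 with h2 | h2
      · have := coord_le h2 b; rw [hb1, hp] at this; omega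
      · exact h2
    simp [hb1, hpw]

/-- The order dual of `sum_lower`. -/
lemma sum_upper {v q : Cube (Fin d)} {a : Fin d} (hv : v a = 0) (hq : q a = 1) :
    cls q * cls v * ∑ w ∈ Finset.Ioc v ⊤, cls w =
      cls q * cls v * ∑ w ∈ Finset.Ioc v (Function.update q a 0), cls w := by
  classical
  have h0 := cls_mul_cls_mul_sum (u := q) (w := v) (i := a) (by rw [hq, hv]; decide)
  rw [← sub_zero (cls q * cls v * ∑ w ∈ Finset.Ioc v ⊤, cls w), ← h0]
  simp only [Finset.mul_sum]
  rw [← Fintype.sum_ite_mem, ← Fintype.sum_ite_mem (Finset.Ioc v _)]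
  simp only [Finset.sum_filter]
  rw [← Finset.sum_sub_distrib]
  refine Finset.sum_congr rfl fun w _ => ?_
  simp only [Finset.mem_Ioc, le_top, and_true, le_update_zero_iff hq, hq]
  by_cases h1 : w ≤ v ∨ v ≤ w
  swap
  · have : cls q * cls v * cls w = 0 := by
      rw [mul_assoc, cls_mul_of_not_comparable (by tauto), mul_zero]
    simp [this]
  by_cases h2 : w ≤ q ∨ q ≤ w
  swap
  · have : cls q * cls v * cls w = 0 := by
      rw [mul_right_comm, cls_mul_of_not_comparable (by tauto), zero_mul]
    simp [this]
  by_cases hb : w a = 1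
  · have hlt : v < w := by
      rcases h1 with h1 | h1
      · have := coord_le h1 a; rw [hb, hv] at this; omega
      · refine lt_of_le_of_ne h1 ?_
        rintro rfl; rw [hb] at hv; exact absurd hv (by decide)
    simp [hb, hlt]
  · have hb1 : w a = 0 := by omega
    have hpw : w ≤ q := by
      rcases h2 with h2 | h2
      · exact h2
      · have := coord_le h2 a; rw [hb1, hq] at this; omega
    simp [hb1, hpw]

/-- Self-intersection: the relation (R2) with the incomparable vertices discarded by (R1). -/
lemma cls_sq (v : Cube (Fin d)) :
    cls v * cls v = - (cls v * ∑ w ∈ Finset.Ico ⊥ v, cls w)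
      - cls v * ∑ w ∈ Finset.Ioc v ⊤, cls w := by
  classical
  have h0 := cls_mul_sum v
  suffices h : cls v * ∑ w, cls w = cls v * cls v + cls v * ∑ w ∈ Finset.Ico ⊥ v, cls w
      + cls v * ∑ w ∈ Finset.Ioc v ⊤, cls w by
    rw [h0] at h
    linear_combination -h
  have hv : cls v * cls v = ∑ w, if w = v then cls v * cls w else 0 := by simp
  simp only [Finset.mul_sum]
  rw [← Fintype.sum_ite_mem (Finset.Ico ⊥ v), ← Fintype.sum_ite_mem (Finset.Ioc v _), hv]
  rw [← Finset.sum_add_distrib, ← Finset.sum_add_distrib]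
  refine Finset.sum_congr rfl fun w _ => ?_
  simp only [Finset.mem_Ioc, Finset.mem_Ico, bot_le, le_top, and_true, true_and]
  by_cases h1 : w ≤ v ∨ v ≤ w
  swap
  · have : cls v * cls w = 0 := cls_mul_of_not_comparable (by tauto)
    simp [this]
  by_cases h : w = v
  · subst h; simp
  · rcases h1 with h1 | h1
    · have h2 : w < v := lt_of_le_of_ne h1 h
      simp [h, h2, h2.not_gt]
    · have h2 : v < w := lt_of_le_of_ne h1 (Ne.symm h)
      simp [h, h2, h2.not_gt]

end Relations

end ChowCube

/-! ### All maximal chains have the same class -/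

namespace ChowCube

section MaximalChains

variable {d : ℕ}

lemma eq_of_le_of_wt_le {u w : Cube (Fin d)} (h : u ≤ w) (hw : wt (Fin d) w ≤ wt (Fin d) u) :
    u = w := by
  by_contra hne
  exact absurd (wt_strictMono (lt_of_le_of_ne h hne)) (by omega)

/-- `IsSaturatedProd x P` says that `P` is the product of the classes of the vertices of a maximal
chain in the interval `[x, ⊤]`. -/
inductive IsSaturatedProd : Cube (Fin d) → Chow (Fin d) → Prop
  | top : IsSaturatedProd ⊤ (cls ⊤)
  | step {x : Cube (Fin d)} {i : Fin d} {P : Chow (Fin d)} (hx : x i = 0)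
      (hP : IsSaturatedProd (Function.update x i 1) P) : IsSaturatedProd x (cls x * P)

lemma IsSaturatedProd.exists_eq_mul {x : Cube (Fin d)} {P : Chow (Fin d)}
    (h : IsSaturatedProd x P) : ∃ Q, P = cls x * Q := by
  cases h with
  | top => exact ⟨1, by simp⟩
  | step hx hP => exact ⟨_, rfl⟩

lemma exists_isSaturatedProd (x : Cube (Fin d)) : ∃ P, IsSaturatedProd x P := by
  induction hm : d - wt (Fin d) x generalizing x with
  | zero =>
    have : x = ⊤ := eq_of_le_of_wt_le le_top (by rw [wt_top]; omega)
    exact ⟨_, this ▸ IsSaturatedProd.top⟩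
  | succ m ih =>
    have hlt : x < ⊤ := by
      refine lt_of_le_of_ne le_top ?_
      rintro rfl
      rw [wt_top] at hm; omega
    obtain ⟨i, hi, _⟩ := exists_coord hlt
    obtain ⟨P, hP⟩ := ih (Function.update x i 1) (by rw [wt_update_one hi]; omega)
    exact ⟨_, .step hi hP⟩

lemma Ico_singleton {p v : Cube (Fin d)} (h : p < v) (hw : wt (Fin d) v = wt (Fin d) p + 1) :
    Finset.Ico p v = {p} := by
  ext w
  rw [Finset.mem_Ico, Finset.mem_singleton]
  constructor
  · rintro ⟨h1, h2⟩
    have := wt_strictMono h2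
    exact (eq_of_le_of_wt_le h1 (by omega)).symm
  · rintro rfl
    exact ⟨le_rfl, h⟩

/-- The two saturated chains between `x` and `x + e_i + e_j` have the same class: by `sum_lower` for
the coordinates `i` and `j`, both equal `C_x C_{x+e_i+e_j}` times the sum of all `C_w` with
`w < x + e_i + e_j`. -/
lemma cls_swap {x : Cube (Fin d)} {i j : Fin d} (hij : i ≠ j) (hi : x i = 0) (hj : x j = 0) :
    cls x * cls (Function.update (Function.update x i 1) j 1) * cls (Function.update x i 1) =
      cls x * cls (Function.update (Function.update x i 1) j 1) *
        cls (Function.update x j 1) := by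
  have hlt : ∀ {u : Cube (Fin d)} {i : Fin d}, u i = 0 → u < Function.update u i 1 := by
    intro u i h
    refine lt_of_le_of_ne ((update_one_le_iff h).1 le_rfl).1 fun e => ?_
    have := wt_update_one h
    rw [← e] at this
    omega
  have hij' : Function.update x i 1 j = 0 := by simp [hij.symm, hj]
  have hji' : Function.update x j 1 i = 0 := by simp [hij, hi]
  have hcomm := Function.update_comm hij (1 : Fin 2) 1 x
  have h1 := sum_lower (p := x) (v := Function.update (Function.update x i 1) j 1) (b := i) hi
    (by simp [hij])
  have h2 := sum_lower (p := x) (v := Function.update (Function.update x i 1) j 1) (b := j) hj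
    (by simp)
  rw [h1, Ico_singleton (hlt hij') (wt_update_one hij'), Ico_singleton, Finset.sum_singleton,
    Finset.sum_singleton] at h2
  · exact h2
  · rw [hcomm]; exact hlt hji'
  · rw [hcomm]; exact wt_update_one hji'

/-- The product over a maximal chain of `[x, ⊤]` does not depend on the chain. If two chains leave `x`
in directions `i ≠ j`, the induction hypothesis lets both of them continue through
`x + e_i + e_j`, and `cls_swap` applies. -/
lemma IsSaturatedProd.unique {x : Cube (Fin d)} {P Q : Chow (Fin d)}
    (hP : IsSaturatedProd x P) (hQ : IsSaturatedProd x Q) : P = Q := by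
  induction hm : d - wt (Fin d) x using Nat.strong_induction_on generalizing x P Q with
  | _ m ih =>
  have hone : ∀ i, (⊤ : Cube (Fin d)) i ≠ 0 := by
    intro i; change (1 : Fin 2) ≠ 0; decide
  cases hP with
  | top =>
    cases hQ with
    | top => rfl
    | step hx _ => exact absurd hx (hone _)
  | @step _ i P' hi hP' =>
    cases hQ with
    | top => exact absurd hi (hone _)
    | @step _ j Q' hj hQ' =>
      have hwi := wt_update_one hi
      have hwj := wt_update_one hj
      have hle := wt_le (Function.update x i 1)
      by_cases hij : i = j
      · subst hij
        rw [ih _ (by omega) hP' hQ' rfl]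
      · obtain ⟨E, hE⟩ :=
          exists_isSaturatedProd (Function.update (Function.update x i 1) j 1)
        have e1 := ih _ (by omega) hP'
          (.step (i := j) (by simp [Ne.symm hij, hj]) hE) rfl
        have hE' := hE
        rw [Function.update_comm hij] at hE'
        have e2 := ih _ (by omega) hQ' (.step (i := i) (by simp [hij, hi]) hE') rfl
        obtain ⟨E', rfl⟩ := hE.exists_eq_mul
        rw [e1, e2]
        linear_combination E' * cls_swap hij hi hj

/-- A chain starting at `x` has at most `d - |x| + 1` elements, and if it attains this bound it is a
maximal chain of `[x, ⊤]`. -/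
lemma isSaturatedProd_list (x : Cube (Fin d)) (t : List (Cube (Fin d)))
    (h : (x :: t).Pairwise (· < ·)) :
    t.length + wt (Fin d) x ≤ d ∧
      (t.length + wt (Fin d) x = d → IsSaturatedProd x ((x :: t).map cls).prod) := by
  induction t generalizing x with
  | nil =>
    refine ⟨by simpa using wt_le x, fun hx => ?_⟩
    have : x = ⊤ := eq_of_le_of_wt_le le_top (by rw [wt_top]; simp at hx; omega)
    subst this
    simpa using IsSaturatedProd.top
  | cons y t ih =>
    obtain ⟨h1, h2⟩ := List.pairwise_cons.1 h
    have hxy : x < y := h1 y (by simp)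
    obtain ⟨ih1, ih2⟩ := ih y h2
    have := wt_strictMono hxy
    rw [List.length_cons]
    refine ⟨by omega, fun hx => ?_⟩
    obtain ⟨i, hi, hi'⟩ := exists_coord hxy
    have he : Function.update x i 1 = y :=
      eq_of_le_of_wt_le ((update_one_le_iff hi).2 ⟨hxy.le, hi'⟩)
        (by rw [wt_update_one hi]; omega)
    rw [List.map_cons, List.prod_cons]
    exact .step hi (he ▸ ih2 (by omega))

lemma isSaturatedProd_of_length {l : List (Cube (Fin d))} (h : l.Pairwise (· < ·))
    (hl : l.length = d + 1) : IsSaturatedProd ⊥ (l.map cls).prod := by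
  cases l with
  | nil => simp at hl
  | cons x t =>
    rw [List.length_cons] at hl
    obtain ⟨h1, h2⟩ := isSaturatedProd_list x t h
    have : ⊥ = x := eq_of_le_of_wt_le bot_le (by omega)
    rw [this]
    exact h2 (by omega)

lemma chainVtx_lt {j j' : ℕ} (h : j < j') (h' : j' ≤ d) :
    chainVtx (Fin d) j < chainVtx (Fin d) j' := by
  have hc : ∀ i : Fin d, (Finset.univ.filter fun i' => i' < i).card = i := by
    intro i
    rw [Finset.filter_gt_eq_Iio, Fin.card_Iio]
  refine Pi.lt_def.2 ⟨fun i => ?_, ⟨j, by omega⟩, ?_⟩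
  · simp only [chainVtx, hc]
    split_ifs <;> omega
  · simp only [chainVtx, hc]
    simp [h]

lemma prod_cls_eq_genMono {l : List (Cube (Fin d))} (h : l.Pairwise (· < ·))
    (hl : l.length = d + 1) : (l.map cls).prod = mk (Fin d) (genMono (Fin d)) := by
  have hg : mk (Fin d) (genMono (Fin d)) =
      (((List.range (d + 1)).map (chainVtx (Fin d))).map cls).prod := by
    rw [genMono, map_prod, Fintype.card_fin, List.map_map]
    rfl
  rw [hg]
  refine (isSaturatedProd_of_length h hl).unique (isSaturatedProd_of_length ?_ (by simp))
  rw [List.pairwise_map]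
  refine List.Pairwise.imp_of_mem ?_ (List.pairwise_lt_range)
  intro a b ha hb hab
  exact chainVtx_lt hab (by simp at hb; omega)

end MaximalChains

end ChowCube

/-! ### The numerical coefficient and its recursion -/

namespace ChowCube

section Coefficient

variable {d : ℕ}

/-- The contribution of the gap between two consecutive vertices of weights `M - 1` and `W`, where `N`
is the sum of the exponents up to the first one. It vanishes unless `M ≤ N`, and, when `M ≤ W`,
unless `N ≤ W`. -/
def gap (M N W : ℕ) : ℕ := if M ≤ N then (W - M).choose (N - M) else 0

/-- The absolute value of the degree of a monomial given as a list of pairs (vertex, exponent), without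
any condition on the exponents. Here `M` is one more than the weight of the preceding vertex and `N`
the sum of the preceding exponents; both are `0` at the beginning, and the end of the list is
treated like a vertex of weight `d + 1`. -/
def coef : ℕ → ℕ → List (Cube (Fin d) × ℕ) → ℕ
  | M, N, [] => gap M N (d + 1)
  | M, N, (v, n) :: l =>
    gap M N (wt (Fin d) v) * (n - 1).choose (wt (Fin d) v - N) *
      coef (wt (Fin d) v + 1) (N + n) l

/-- The weight of the first vertex of a list, with the convention `d + 1` for the empty list. -/
def headWt : List (Cube (Fin d) × ℕ) → ℕ
  | [] => d + 1
  | (v, _) :: _ => wt (Fin d) v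

/-- The part of `coef` that does not involve the first gap; see `coef_eq`. -/
def tailCoef : ℕ → List (Cube (Fin d) × ℕ) → ℕ
  | _, [] => 1
  | N, (v, n) :: l => (n - 1).choose (wt (Fin d) v - N) * coef (wt (Fin d) v + 1) (N + n) l

lemma coef_eq (M N : ℕ) (l : List (Cube (Fin d) × ℕ)) :
    coef M N l = gap M N (headWt l) * tailCoef N l := by
  cases l with
  | nil => simp [coef, headWt, tailCoef]
  | cons p l => simp [coef, headWt, tailCoef, mul_assoc]

lemma gap_self (M N : ℕ) : gap M N N = if M ≤ N then 1 else 0 := by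
  simp [gap]

lemma gap_diag (N W : ℕ) : gap N N W = 1 := by
  simp [gap]

lemma gap_eq_zero {M N W : ℕ} (h : W < N) (hM : M ≤ W) : gap M N W = 0 := by
  rw [gap, if_pos (by omega), Nat.choose_eq_zero_of_lt (by omega)]

lemma gap_mul_choose {M N W : ℕ} (h : M ≤ W) :
    gap M N W * Nat.choose 0 (W - N) = if W = N then (if M ≤ N then 1 else 0) else 0 := by
  split_ifs with h1 h2
  · subst h1; simp [gap_self, h2]
  · omega
  · rcases lt_or_gt_of_ne h1 with h1 | h1
    · rw [gap_eq_zero h1 h, zero_mul]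
    · rw [Nat.choose_eq_zero_of_lt (by omega : 0 < W - N), mul_zero]

/-- Inserting a vertex `w` with exponent `1` below `v` gives a nonzero coefficient only if `|w| = N`,
so the sum is the number of such vertices times a single coefficient. -/
lemma sum_lower_coef {p v : Cube (Fin d)} (hpv : p ≤ v) (N n : ℕ)
    (l : List (Cube (Fin d) × ℕ)) :
    ∑ w ∈ Finset.Ico p v, coef (wt (Fin d) p) N ((w, 1) :: (v, n + 1) :: l) =
      if N < wt (Fin d) v then
        gap (wt (Fin d) p) N (wt (Fin d) v) * (n.choose (wt (Fin d) v - (N + 1)) *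
          coef (wt (Fin d) v + 1) (N + (n + 2)) l)
      else 0 := by
  have hterm : ∀ w ∈ Finset.Ico p v, coef (wt (Fin d) p) N ((w, 1) :: (v, n + 1) :: l) =
      if wt (Fin d) w = N then n.choose (wt (Fin d) v - (N + 1)) *
          coef (wt (Fin d) v + 1) (N + (n + 2)) l else 0 := by
    intro w hw
    rw [Finset.mem_Ico] at hw
    have h1 := wt_mono hw.1
    rw [coef, Nat.sub_self, gap_mul_choose h1]
    split_ifs with h2 h3
    · subst h2
      rw [coef, gap_diag, one_mul, one_mul, Nat.add_sub_cancel]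
      congr 2; omega
    · omega
    · rw [zero_mul]
  rw [Finset.sum_congr rfl hterm, ← Finset.sum_filter, Finset.sum_const, smul_eq_mul]
  split_ifs with h
  · congr 1
    rw [gap]
    split_ifs with h1
    · rw [← card_Icc_wt hpv h1]
      congr 1
      ext w
      simp only [Finset.mem_filter, Finset.mem_Ico, Finset.mem_Icc]
      constructor
      · rintro ⟨⟨h2, h3⟩, h4⟩; exact ⟨⟨h2, h3.le⟩, h4⟩
      · rintro ⟨⟨h2, h3⟩, h4⟩
        refine ⟨⟨h2, lt_of_le_of_ne h3 ?_⟩, h4⟩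
        rintro rfl; omega
    · rw [Finset.card_eq_zero, Finset.filter_eq_empty_iff]
      intro w hw
      rw [Finset.mem_Ico] at hw
      have := wt_mono hw.1
      omega
  · rw [Finset.card_eq_zero.2, zero_mul]
    rw [Finset.filter_eq_empty_iff]
    intro w hw
    rw [Finset.mem_Ico] at hw
    have := wt_strictMono hw.2
    omega

/-- Inserting a vertex `w` with exponent `1` above `v` gives a nonzero coefficient only if
`|w| = N + n + 1`, the sum of the preceding exponents. -/
lemma sum_upper_coef {v q : Cube (Fin d)} (hvq : v ≤ q) (M N n : ℕ)
    (l : List (Cube (Fin d) × ℕ)) (hq : wt (Fin d) q + 1 = headWt l) :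
    ∑ w ∈ Finset.Ioc v q, coef M N ((v, n + 1) :: (w, 1) :: l) =
      gap M N (wt (Fin d) v) * n.choose (wt (Fin d) v - N) *
        coef (wt (Fin d) v + 1) (N + (n + 2)) l := by
  -- the unique weight an inserted vertex can have
  set N' := N + (n + 1) with hN'
  have hN2 : N + (n + 2) = N' + 1 := by omega
  rw [hN2, coef_eq _ _ l]
  have hterm : ∀ w ∈ Finset.Ioc v q, coef M N ((v, n + 1) :: (w, 1) :: l) =
      if wt (Fin d) w = N' then gap M N (wt (Fin d) v) * n.choose (wt (Fin d) v - N) *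
          tailCoef (N' + 1) l else 0 := by
    intro w hw
    rw [Finset.mem_Ioc] at hw
    have h1 := wt_strictMono hw.1
    rw [coef, coef, Nat.sub_self, gap_mul_choose (by omega), Nat.add_sub_cancel, ← hN']
    split_ifs with h2 h3
    · rw [h2, coef_eq, gap_diag, one_mul, one_mul]
    · omega
    · simp
  rw [Finset.sum_congr rfl hterm, ← Finset.sum_filter, Finset.sum_const, smul_eq_mul, ← hq]
  by_cases h : wt (Fin d) v < N'
  · have hc : ((Finset.Ioc v q).filter fun w => wt (Fin d) w = N').card =
        gap (wt (Fin d) v + 1) (N' + 1) (wt (Fin d) q + 1) := by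
      rw [gap, if_pos (by omega), Nat.add_sub_add_right, Nat.add_sub_add_right,
        ← card_Icc_wt hvq h.le]
      congr 1
      ext w
      simp only [Finset.mem_filter, Finset.mem_Ioc, Finset.mem_Icc]
      constructor
      · rintro ⟨⟨h2, h3⟩, h4⟩; exact ⟨⟨h2.le, h3⟩, h4⟩
      · rintro ⟨⟨h2, h3⟩, h4⟩
        refine ⟨⟨lt_of_le_of_ne h2 ?_, h3⟩, h4⟩
        rintro rfl; omega
    rw [hc]; ring
  · rw [Nat.choose_eq_zero_of_lt (by omega : n < wt (Fin d) v - N)]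
    simp

/-- The coefficients satisfy the same recursion as the monomials. After `sum_lower_coef` and
`sum_upper_coef` this is Pascal's rule for `(n + 1).choose (|v| - N)`. -/
lemma coef_split {p v q : Cube (Fin d)} (hpv : p ≤ v) (hvq : v ≤ q) (N n : ℕ)
    (l : List (Cube (Fin d) × ℕ)) (hq : wt (Fin d) q + 1 = headWt l) :
    coef (wt (Fin d) p) N ((v, n + 2) :: l) =
      ∑ w ∈ Finset.Ico p v, coef (wt (Fin d) p) N ((w, 1) :: (v, n + 1) :: l) +
      ∑ w ∈ Finset.Ioc v q, coef (wt (Fin d) p) N ((v, n + 1) :: (w, 1) :: l) := by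
  rw [sum_lower_coef hpv, sum_upper_coef hvq _ _ _ _ hq, coef]
  have := wt_mono hpv
  rcases lt_trichotomy N (wt (Fin d) v) with h | h | h
  · rw [if_pos h]
    have e : wt (Fin d) v - N = (wt (Fin d) v - (N + 1)) + 1 := by omega
    rw [e, show n + 2 - 1 = n + 1 by omega, Nat.choose_succ_succ]
    ring
  · rw [if_neg (by omega), h]; simp
  · rw [if_neg (by omega), gap_eq_zero h this]; simp

end Coefficient

/-! ### Reduction of monomials to maximal chains -/

section Reduction

variable {d : ℕ}

/-- The class of the monomial encoded by a list of pairs (vertex, exponent). -/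
noncomputable def mon (l : List (Cube (Fin d) × ℕ)) : Chow (Fin d) :=
  (l.map fun p => cls p.1 ^ p.2).prod

/-- The vertices are strictly increasing and the exponents are positive. -/
def IsChainList (l : List (Cube (Fin d) × ℕ)) : Prop :=
  l.Pairwise (fun p q => p.1 < q.1) ∧ ∀ p ∈ l, 1 ≤ p.2

@[simp] lemma mon_nil : mon ([] : List (Cube (Fin d) × ℕ)) = 1 := by simp [mon]

@[simp] lemma mon_cons (p : Cube (Fin d) × ℕ) (l : List (Cube (Fin d) × ℕ)) :
    mon (p :: l) = cls p.1 ^ p.2 * mon l := by simp [mon]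

@[simp] lemma mon_append (l l' : List (Cube (Fin d) × ℕ)) :
    mon (l ++ l') = mon l * mon l' := by simp [mon]

/-- Below `v`, in the presence of a chain `l` of smaller vertices, only an interval `[p, v)` matters.
If `l` is empty, `p` is the bottom vertex; otherwise `p` is the last vertex of `l` with one more
coordinate, at which `v` is `1`, raised to `1`. In both cases `|p|` and the sum `N` of the
exponents of `l` are the parameters with which the recursion for `coef` leaves `l`. -/
lemma lower_spec (l : List (Cube (Fin d) × ℕ)) (v : Cube (Fin d))
    (hl : IsChainList l) (hv : ∀ p ∈ l, p.1 < v) :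
    ∃ (A N : ℕ) (p : Cube (Fin d)), p ≤ v ∧ (∀ u ∈ l, ∀ w, p ≤ w → u.1 < w) ∧
      (∀ l', coef 0 0 (l ++ l') = A * coef (wt (Fin d) p) N l') ∧
      mon l * cls v * ∑ w ∈ Finset.Ico ⊥ v, cls w =
        mon l * cls v * ∑ w ∈ Finset.Ico p v, cls w := by
  induction l using List.reverseRecOn generalizing v with
  | nil => exact ⟨1, 0, ⊥, bot_le, by simp, by simp [wt_bot], rfl⟩
  | append_singleton l u ih =>
    obtain ⟨u, n⟩ := u
    obtain ⟨h1, h2⟩ := hl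
    rw [List.pairwise_append] at h1
    obtain ⟨h1, -, h3⟩ := h1
    obtain ⟨A, N, p, hp, -, hA, -⟩ := ih u ⟨h1, fun q hq => h2 q (by simp [hq])⟩
      (fun q hq => h3 q hq (u, n) (by simp))
    have huv : u < v := hv (u, n) (by simp)
    obtain ⟨b, hub, hvb⟩ := exists_coord huv
    have hn : 1 ≤ n := h2 (u, n) (by simp)
    refine ⟨A * (gap (wt (Fin d) p) N (wt (Fin d) u) * (n - 1).choose (wt (Fin d) u - N)), N + n,
      Function.update u b 1, (update_one_le_iff hub).2 ⟨huv.le, hvb⟩, ?_, ?_, ?_⟩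
    · intro q hq w hw
      obtain ⟨hw1, hw2⟩ := (update_one_le_iff hub).1 hw
      have huw : u < w := lt_of_le_of_ne hw1 (by rintro rfl; rw [hub] at hw2; omega)
      rcases List.mem_append.1 hq with hq | hq
      · exact (h3 q hq (u, n) (by simp)).trans huw
      · simp only [List.mem_singleton] at hq
        subst hq; exact huw
    · intro l'
      rw [List.append_assoc, hA, List.singleton_append, coef, wt_update_one hub]
      ring
    · obtain ⟨m, rfl⟩ := Nat.exists_eq_add_of_le' hn
      simp only [mon_append, mon_cons, mon_nil, pow_succ]
      linear_combination mon l * cls u ^ m * sum_lower hub hvb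

/-- Above `v`, in the presence of a chain `l` of larger vertices, only an interval `(v, q]` matters.
If `l` is empty, `q` is the top vertex; otherwise `q` is the first vertex of `l` with one
coordinate, at which `v` is `0`, lowered to `0`. -/
lemma upper_spec (l : List (Cube (Fin d) × ℕ)) (v : Cube (Fin d))
    (hl : IsChainList l) (hv : ∀ p ∈ l, v < p.1) :
    ∃ q : Cube (Fin d), v ≤ q ∧ (∀ u ∈ l, ∀ w, w ≤ q → w < u.1) ∧
      wt (Fin d) q + 1 = headWt l ∧
      mon l * cls v * ∑ w ∈ Finset.Ioc v ⊤, cls w =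
        mon l * cls v * ∑ w ∈ Finset.Ioc v q, cls w := by
  cases l with
  | nil => exact ⟨⊤, le_top, by simp, by simp [headWt, wt_top], rfl⟩
  | cons u l =>
    obtain ⟨u, n⟩ := u
    obtain ⟨h1, h2⟩ := hl
    rw [List.pairwise_cons] at h1
    have hvu : v < u := hv (u, n) (by simp)
    obtain ⟨a, hva, hua⟩ := exists_coord hvu
    have hn : 1 ≤ n := h2 (u, n) (by simp)
    refine ⟨Function.update u a 0, (le_update_zero_iff hua).2 ⟨hvu.le, hva⟩, ?_,
      wt_update_zero hua, ?_⟩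
    · intro q hq w hw
      obtain ⟨hw1, hw2⟩ := (le_update_zero_iff hua).1 hw
      have hwu : w < u := lt_of_le_of_ne hw1 (by rintro rfl; rw [hua] at hw2; omega)
      rcases List.mem_cons.1 hq with hq | hq
      · subst hq; exact hwu
      · exact hwu.trans (h1.1 q hq)
    · obtain ⟨m, rfl⟩ := Nat.exists_eq_add_of_le' hn
      simp only [mon_cons, pow_succ]
      linear_combination mon l * cls u ^ m * sum_upper hva hua

lemma coef_ones (l : List (Cube (Fin d) × ℕ)) (N : ℕ) (hl : l.Pairwise (fun p q => p.1 < q.1))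
    (h1 : ∀ p ∈ l, p.2 = 1) (hlen : l.length + N = d + 1) (hN : N ≤ headWt l) :
    coef N N l = 1 := by
  induction l generalizing N with
  | nil => simp [coef, gap_diag]
  | cons u l ih =>
    obtain ⟨u, n⟩ := u
    obtain rfl : n = 1 := h1 (u, n) (by simp)
    have hmap : (u :: l.map Prod.fst).Pairwise (· < ·) := by
      have := List.pairwise_map.2 hl
      simpa using this
    obtain ⟨h2, -⟩ := isSaturatedProd_list _ _ hmap
    simp only [headWt, List.length_cons, List.length_map] at *
    have hu : wt (Fin d) u = N := by omega
    rw [coef, gap_diag, hu, Nat.sub_self, ih]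
    · simp
    · exact (List.pairwise_cons.1 hl).2
    · exact fun p hp => h1 p (by simp [hp])
    · omega
    · cases l with
      | nil => simp at *; omega
      | cons q l =>
        have : wt (Fin d) u < wt (Fin d) q.1 :=
          wt_strictMono ((List.pairwise_cons.1 hl).1 q (by simp))
        change N + 1 ≤ wt (Fin d) q.1
        omega

/-- The degree of every monomial of degree `d + 1` supported on a chain, by induction on the excess
`m` of the degree over the number of vertices. -/
lemma mon_eq (m : ℕ) (l : List (Cube (Fin d) × ℕ)) (hl : IsChainList l)
    (hm : l.length + m = d + 1) (hs : (l.map Prod.snd).sum = d + 1) :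
    mon l = ((-1 : ℤ) ^ m * (coef 0 0 l : ℤ)) • mk (Fin d) (genMono (Fin d)) := by
  induction m generalizing l with
  | zero =>
    have h1 : ∀ p ∈ l, p.2 = 1 := by
      by_contra! h
      obtain ⟨p, hp, hne⟩ := h
      have h2 : (l.map fun _ => 1).sum < (l.map Prod.snd).sum :=
        List.sum_lt_sum (fun _ => 1) Prod.snd hl.2
          ⟨p, hp, lt_of_le_of_ne (hl.2 p hp) (Ne.symm hne)⟩
      simp at h2
      omega
    rw [coef_ones l 0 hl.1 h1 (by omega) (Nat.zero_le _)]
    have h3 : mon l = ((l.map Prod.fst).map cls).prod := by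
      rw [mon, List.map_map]
      congr 1
      refine List.map_congr_left fun p hp => ?_
      simp [h1 p hp]
    rw [h3, prod_cls_eq_genMono (List.pairwise_map.2 hl.1) (by simp; omega)]
    simp
  | succ m ih =>
    have h1 : ∃ p ∈ l, 2 ≤ p.2 := by
      by_contra! h
      have h2 : (l.map Prod.snd).sum ≤ (l.map fun _ => 1).sum :=
        List.sum_le_sum fun p hp => Nat.le_of_lt_succ (h p hp)
      simp at h2
      omega
    obtain ⟨⟨v, n⟩, hp, hn⟩ := h1
    obtain ⟨n, rfl⟩ := Nat.exists_eq_add_of_le' hn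
    obtain ⟨l₁, l₂, rfl⟩ := List.append_of_mem hp
    obtain ⟨hl1, hl2⟩ := hl
    simp only [List.pairwise_append, List.pairwise_cons, List.mem_cons, List.mem_append,
      forall_eq_or_imp] at hl1 hl2
    obtain ⟨hc1, ⟨hv2, hc2⟩, hc12⟩ := hl1
    have hv1 : ∀ u ∈ l₁, u.1 < v := fun u hu => (hc12 u hu).1
    obtain ⟨A, N, p, hpv, hpl, hA, hlow⟩ := lower_spec l₁ v
      ⟨hc1, fun u hu => hl2 u (Or.inl hu)⟩ hv1
    obtain ⟨q, hvq, hql, hqw, hup⟩ := upper_spec l₂ v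
      ⟨hc2, fun u hu => hl2 u (Or.inr (Or.inr hu))⟩ hv2
    simp only [List.length_append, List.length_cons, List.map_append, List.map_cons,
      List.sum_append, List.sum_cons] at hm hs
    have hlo : ∀ w ∈ Finset.Ico p v, mon l₁ * cls v ^ (n + 1) * mon l₂ * cls w =
        ((-1 : ℤ) ^ m * ((A * coef (wt (Fin d) p) N ((w, 1) :: (v, n + 1) :: l₂) : ℕ) : ℤ)) •
          mk (Fin d) (genMono (Fin d)) := by
      intro w hw
      rw [Finset.mem_Ico] at hw
      rw [← hA, ← ih]
      · simp only [mon_append, mon_cons]; ring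
      · constructor
        · simp only [List.pairwise_append, List.pairwise_cons, List.mem_cons, forall_eq_or_imp]
          exact ⟨hc1, ⟨⟨hw.2, fun u hu => hw.2.trans (hv2 u hu)⟩, hv2, hc2⟩,
            fun u hu => ⟨hpl u hu w hw.1, hv1 u hu, (hc12 u hu).2⟩⟩
        · intro u hu
          simp only [List.mem_append, List.mem_cons] at hu
          rcases hu with hu | rfl | rfl | hu
          · exact hl2 u (Or.inl hu)
          · simp
          · simp
          · exact hl2 u (Or.inr (Or.inr hu))
      · simp; omega
      · simp; omega
    have hhi : ∀ w ∈ Finset.Ioc v q, mon l₁ * cls v ^ (n + 1) * mon l₂ * cls w =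
        ((-1 : ℤ) ^ m * ((A * coef (wt (Fin d) p) N ((v, n + 1) :: (w, 1) :: l₂) : ℕ) : ℤ)) •
          mk (Fin d) (genMono (Fin d)) := by
      intro w hw
      rw [Finset.mem_Ioc] at hw
      rw [← hA, ← ih]
      · simp only [mon_append, mon_cons]; ring
      · constructor
        · simp only [List.pairwise_append, List.pairwise_cons, List.mem_cons, forall_eq_or_imp]
          exact ⟨hc1, ⟨⟨hw.1, hv2⟩, fun u hu => hql u hu w hw.2, hc2⟩,
            fun u hu => ⟨hv1 u hu, (hv1 u hu).trans hw.1, (hc12 u hu).2⟩⟩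
        · intro u hu
          simp only [List.mem_append, List.mem_cons] at hu
          rcases hu with hu | rfl | rfl | hu
          · exact hl2 u (Or.inl hu)
          · simp
          · simp
          · exact hl2 u (Or.inr (Or.inr hu))
      · simp; omega
      · simp; omega
    -- one factor of `C_v ^ 2` is expanded by the self-intersection formula
    have hred : mon (l₁ ++ (v, n + 2) :: l₂) =
        - (∑ w ∈ Finset.Ico p v, mon l₁ * cls v ^ (n + 1) * mon l₂ * cls w) -
          ∑ w ∈ Finset.Ioc v q, mon l₁ * cls v ^ (n + 1) * mon l₂ * cls w := by
      rw [← Finset.mul_sum, ← Finset.mul_sum]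
      simp only [mon_append, mon_cons]
      linear_combination mon l₁ * cls v ^ n * mon l₂ * cls_sq v -
        cls v ^ n * mon l₂ * hlow - cls v ^ n * mon l₁ * hup
    rw [hred, Finset.sum_congr rfl hlo, Finset.sum_congr rfl hhi, ← Finset.sum_smul,
      ← Finset.sum_smul, ← Finset.mul_sum, ← Finset.mul_sum, ← Nat.cast_sum, ← Nat.cast_sum,
      ← Finset.mul_sum, ← Finset.mul_sum, hA, coef_split hpv hvq N n l₂ hqw, ← neg_smul,
      ← sub_smul]
    congr 1
    push_cast
    ring

end Reduction

end ChowCube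

/-! ### The coefficient in terms of the sequences `x_i` and `y_i` -/

namespace ChowCube

section Conversion

variable {d k : ℕ} (v : Fin k → Cube (Fin d)) (n : Fin k → ℕ)

lemma ps1_zero : ps1 n 0 = 0 := by simp [ps1]

lemma ps1_succ {i : ℕ} (hi : i < k) : ps1 n (i + 1) = ps1 n i + n ⟨i, hi⟩ := by
  have : (Finset.univ.filter fun j : Fin k => (j : ℕ) < i + 1) =
      insert ⟨i, hi⟩ (Finset.univ.filter fun j : Fin k => (j : ℕ) < i) := by
    ext j
    simp only [Finset.mem_filter, Finset.mem_univ, true_and, Finset.mem_insert, Fin.ext_iff]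
    omega
  rw [ps1, this, Finset.sum_insert (by simp), add_comm, ps1]

lemma ps1_last : ps1 n k = ∑ i, n i := by
  rw [ps1, Finset.filter_true_of_mem]
  intro j _; exact j.2

/-- The monomial `∏ C_{v_i}^{n_i}` as a list of pairs (vertex, exponent). -/
def toList : List (Cube (Fin d) × ℕ) := List.ofFn fun i => (v i, n i)

lemma drop_toList {i : ℕ} (hi : i < k) :
    (toList v n).drop i = (vext v i, n ⟨i, hi⟩) :: (toList v n).drop (i + 1) := by
  rw [List.drop_eq_getElem_cons (by simpa [toList] using hi)]
  simp [toList, vext, hi]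

variable {v n}

/-- The tail of the product in the degree formula, starting at the `i`-th gap, is the coefficient of
the tail of the list: the numerators are `x_j + y_j = |v_{j+1}| - |v_j| - 1` and
`y_j + x_{j+1} = n_{j+1} - 1`. -/
lemma coef_drop (hn : ∀ i, 1 ≤ n i) (hsum : ∑ i, n i = d + 1)
    (hbound : ∀ i : ℕ, 1 ≤ i → i ≤ k - 1 →
      wt (Fin d) (vext v (i - 1)) + 1 ≤ ps1 n i ∧ ps1 n i ≤ wt (Fin d) (vext v i))
    (hlast : wt (Fin d) (vext v (k - 1)) + 1 ≤ d + 1) {i : ℕ} (hi : 1 ≤ i) (hik : i ≤ k) :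
    coef (wt (Fin d) (vext v (i - 1)) + 1) (ps1 n i) ((toList v n).drop i) =
      ∏ j ∈ Finset.Ico i k, (xseq v n j + yseq v n j).choose (xseq v n j) *
        (yseq v n j + xseq v n (j + 1)).choose (yseq v n j) := by
  induction hm : k - i generalizing i with
  | zero =>
    obtain rfl : i = k := by omega
    rw [List.drop_of_length_le (by simp [toList]), coef, ps1_last, hsum, gap_self,
      if_pos hlast]
    simp
  | succ m ih =>
    have hik' : i < k := by omega
    obtain ⟨hb1, hb2⟩ := hbound i hi (by omega)
    have hs := ps1_succ n hik'
    have hb3 : wt (Fin d) (vext v i) + 1 ≤ ps1 n (i + 1) := by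
      rcases Nat.lt_or_ge (i + 1) k with h | h
      · exact (hbound (i + 1) (by omega) (by omega)).1
      · obtain rfl : i + 1 = k := by omega
        rw [ps1_last, hsum]; exact hlast
    have hn' := hn ⟨i, hik'⟩
    have ih' := ih (i := i + 1) (by omega) hik' (by omega)
    rw [Nat.add_sub_cancel, hs] at ih'
    rw [drop_toList v n hik', coef, ih', Finset.prod_eq_prod_Ico_succ_bot hik', gap, if_pos hb1]
    congr 1
    have hy : yseq v n i = wt (Fin d) (vext v i) - ps1 n i := by
      rw [yseq, if_neg (by omega)]
    have hx : xseq v n i = ps1 n i - wt (Fin d) (vext v (i - 1)) - 1 := rfl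
    have hx' : xseq v n (i + 1) = ps1 n (i + 1) - wt (Fin d) (vext v i) - 1 := rfl
    congr 2 <;> omega

lemma coef_toList (hk : 1 ≤ k) (hn : ∀ i, 1 ≤ n i) (hsum : ∑ i, n i = d + 1)
    (hbound : ∀ i : ℕ, 1 ≤ i → i ≤ k - 1 →
      wt (Fin d) (vext v (i - 1)) + 1 ≤ ps1 n i ∧ ps1 n i ≤ wt (Fin d) (vext v i))
    (hlast : wt (Fin d) (vext v (k - 1)) + 1 ≤ d + 1) :
    coef 0 0 (toList v n) = (yseq v n 0 + xseq v n 1).choose (yseq v n 0) *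
      ∏ j ∈ Finset.Icc 1 (k - 1), (xseq v n j + yseq v n j).choose (xseq v n j) *
        (yseq v n j + xseq v n (j + 1)).choose (yseq v n j) := by
  have h := coef_drop hn hsum hbound hlast le_rfl hk
  have hIcc : Finset.Icc 1 (k - 1) = Finset.Ico 1 k := by
    ext j; simp only [Finset.mem_Icc, Finset.mem_Ico]; omega
  have hs := ps1_succ n (i := 0) hk
  rw [ps1_zero] at hs
  have hb3 : wt (Fin d) (vext v 0) + 1 ≤ ps1 n 1 := by
    rcases Nat.lt_or_ge 1 k with h | h
    · exact (hbound 1 le_rfl (by omega)).1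
    · obtain rfl : k = 1 := by omega
      rw [ps1_last, hsum]; exact hlast
  have hn' := hn ⟨0, hk⟩
  have hcons : toList v n = (vext v 0, n ⟨0, hk⟩) :: (toList v n).drop 1 := by
    rw [← drop_toList v n hk, List.drop_zero]
  rw [hIcc, ← h, hcons, coef, gap_diag, one_mul, ← hs, List.drop_succ_cons, List.drop_zero]
  congr 1
  have hy : yseq v n 0 = wt (Fin d) (vext v 0) := by simp [yseq]
  have hx' : xseq v n 1 = ps1 n 1 - wt (Fin d) (vext v 0) - 1 := rfl
  have hs' : ps1 n 1 = n ⟨0, hk⟩ := by simpa using hs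
  rw [Nat.sub_zero]
  congr 1 <;> omega

end Conversion

end ChowCube


/-- **Degree formula** (Theorem 1.4 (2)): for a chain `v_1 < … < v_k` in `{0,1}^d` and
exponents `n_i ≥ 1` with `Σ n_i = d+1` satisfying `|v_i| + 1 ≤ n_1+…+n_i ≤ |v_{i+1}|`
for `1 ≤ i ≤ k−1` and `|v_k| + 1 ≤ d+1`, with `y_0 = |v_1|`,
`x_i = n_1+…+n_i − |v_i| − 1` and `y_i = |v_{i+1}| − (n_1+…+n_i)`, one has
`deg(C_{v_1}^{n_1}⋯C_{v_k}^{n_k}) = (−1)^{d+1−k} binom(y_0+x_1, y_0) ·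
∏_{i=1}^{k−1} binom(x_i+y_i, x_i) binom(y_i+x_{i+1}, y_i)`. -/
theorem ChowCube.degree_formula
    (d : ℕ) (hd : 1 ≤ d) (k : ℕ) (hk : 1 ≤ k)
    (v : Fin k → ChowCube.Cube (Fin d)) (hv : StrictMono v)
    (n : Fin k → ℕ) (hn : ∀ i, 1 ≤ n i) (hsum : ∑ i, n i = d + 1)
    (hbound : ∀ i : ℕ, 1 ≤ i → i ≤ k - 1 →
      ChowCube.wt (Fin d) (ChowCube.vext v (i - 1)) + 1 ≤ ChowCube.ps1 n i ∧
      ChowCube.ps1 n i ≤ ChowCube.wt (Fin d) (ChowCube.vext v i))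
    (hlast : ChowCube.wt (Fin d) (ChowCube.vext v (k - 1)) + 1 ≤ d + 1) :
    ChowCube.mk (Fin d) (∏ i, MvPolynomial.X (v i) ^ n i) =
      ((-1 : ℤ) ^ (d + 1 - k) *
        ((Nat.choose (ChowCube.yseq v n 0 + ChowCube.xseq v n 1) (ChowCube.yseq v n 0) *
          ∏ i ∈ Finset.Icc 1 (k - 1),
            Nat.choose (ChowCube.xseq v n i + ChowCube.yseq v n i) (ChowCube.xseq v n i) *
              Nat.choose (ChowCube.yseq v n i + ChowCube.xseq v n (i + 1))
                (ChowCube.yseq v n i) : ℕ) : ℤ)) •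
        ChowCube.mk (Fin d) (ChowCube.genMono (Fin d)) := by
  have hl : ChowCube.IsChainList (ChowCube.toList v n) := by
    refine ⟨List.pairwise_ofFn.2 fun i j hij => hv hij, fun p hp => ?_⟩
    obtain ⟨i, rfl⟩ := List.mem_ofFn.1 hp
    exact hn i
  have hcard : k ≤ d + 1 := by
    rw [← hsum]
    simpa using Finset.sum_le_sum (s := Finset.univ) fun i _ => hn i
  have hprod : ChowCube.mk (Fin d) (∏ i, MvPolynomial.X (v i) ^ n i) =
      ChowCube.mon (ChowCube.toList v n) := by
    rw [ChowCube.mon, ChowCube.toList, List.map_ofFn, List.prod_ofFn, map_prod]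
    simp [ChowCube.cls]
  rw [hprod, ChowCube.mon_eq (d + 1 - k) _ hl (by simp [ChowCube.toList]; omega)
    (by rw [ChowCube.toList, List.map_ofFn, List.sum_ofFn]; exact hsum),
    ChowCube.coef_toList hk hn hsum hbound hlast]
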